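/- arXiv:math/0411588 — 2 statements merged into one kernel-verified Lean document; each statement's English description precedes it below -/
import Mathlib

section
/- In the ring B_A one has (1 + y_k)·(1 − q_k·y_k) = 1 for every 1 ≤ k ≤ m; in particular 1 + y_k is a unit of B_A with inverse 1 − q_k·y_k. -/
open MvPolynomial

/-- The polynomials `q_k` of Definition 3, defined inductively from a strictly upper
triangular integer matrix `A` (indices `0,…,m-1` correspond to the paper's `1,…,m`). -/
noncomputable def qpol {m : ℕ} (A : Fin m → Fin m → ℤ) : Fin m → MvPolynomial (Fin m) ℤ
  | k =>
    ∏ i ∈ (Finset.Iio k).attach,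
      ((X i.1 + 1) ^ (A i.1 k).toNat * (-(qpol A i.1 * X i.1) + 1) ^ (-(A i.1 k)).toNat)
  termination_by k => (k : ℕ)
  decreasing_by exact Fin.lt_iff_val_lt_val.mp (Finset.mem_Iio.mp i.2)

/-- The polynomials `q̄_k` of Definition 3. -/
noncomputable def qbar {m : ℕ} (A : Fin m → Fin m → ℤ) (k : Fin m) : MvPolynomial (Fin m) ℤ :=
  ∏ i ∈ Finset.Iio k,
    ((-(qpol A i * X i) + 1) ^ (A i k).toNat * (X i + 1) ^ (-(A i k)).toNat)

/-- The ideal `⟨y_k² − (q̄_k − 1)·y_k : 1 ≤ k ≤ m⟩` of `ℤ[y₁,…,y_m]`. -/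
noncomputable def relIdeal {m : ℕ} (A : Fin m → Fin m → ℤ) : Ideal (MvPolynomial (Fin m) ℤ) :=
  Ideal.span (Set.range fun k : Fin m => X k ^ 2 - (qbar A k - 1) * X k)

/-- The quotient ring `B_A = ℤ[y₁,…,y_m]/⟨y_k² − (q̄_k − 1)·y_k⟩`. -/
abbrev BA {m : ℕ} (A : Fin m → Fin m → ℤ) :=
  MvPolynomial (Fin m) ℤ ⧸ relIdeal A

/-- The class `y_I ∈ B_A` of the squarefree monomial `∏_{i ∈ I} y_i`. -/
noncomputable def yI {m : ℕ} (A : Fin m → Fin m → ℤ) (I : Finset (Fin m)) : BA A :=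
  Ideal.Quotient.mk (relIdeal A) (∏ i ∈ I, X i)

theorem qpol_eq_prod {m : ℕ} (A : Fin m → Fin m → ℤ) (k : Fin m) :
    qpol A k = ∏ i ∈ Finset.Iio k,
      ((X i + 1) ^ (A i k).toNat * (-(qpol A i * X i) + 1) ^ (-(A i k)).toNat) := by
  rw [qpol]
  exact Finset.prod_attach (Finset.Iio k) fun i =>
    (X i + 1) ^ (A i k).toNat * (-(qpol A i * X i) + 1) ^ (-(A i k)).toNat

theorem mk_X_sq {m : ℕ} (A : Fin m → Fin m → ℤ) (k : Fin m) :
    Ideal.Quotient.mk (relIdeal A) (X k) ^ 2 =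
      (Ideal.Quotient.mk (relIdeal A) (qbar A k) - 1) * Ideal.Quotient.mk (relIdeal A) (X k) := by
  have h : X k ^ 2 - (qbar A k - 1) * X k ∈ relIdeal A := Ideal.subset_span ⟨k, rfl⟩
  simpa [sub_eq_zero] using Ideal.Quotient.eq_zero_iff_mem.mpr h

/-- If `1 - q_i y_i` inverts `1 + y_i` for all `i < k`, then `q̄_k` inverts `q_k`. -/
theorem mk_qpol_mul_mk_qbar {m : ℕ} (A : Fin m → Fin m → ℤ) (k : Fin m)
    (h : ∀ i < k, Ideal.Quotient.mk (relIdeal A) (1 + X i) *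
      Ideal.Quotient.mk (relIdeal A) (1 - qpol A i * X i) = 1) :
    Ideal.Quotient.mk (relIdeal A) (qpol A k) * Ideal.Quotient.mk (relIdeal A) (qbar A k) = 1 := by
  rw [qpol_eq_prod, qbar, ← map_mul, ← Finset.prod_mul_distrib, map_prod]
  refine Finset.prod_eq_one fun i hi => ?_
  have hi := h i (Finset.mem_Iio.mp hi)
  rw [← map_mul] at hi
  calc Ideal.Quotient.mk (relIdeal A) _
      = Ideal.Quotient.mk (relIdeal A)
          (((1 + X i) * (1 - qpol A i * X i)) ^ ((A i k).toNat + (-(A i k)).toNat)) := by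
        congr 1
        rw [pow_add, mul_pow, mul_pow]
        ring
    _ = 1 := by rw [map_pow, hi, one_pow]

theorem mk_one_add_X_mul {m : ℕ} (A : Fin m → Fin m → ℤ) (k : Fin m) :
    Ideal.Quotient.mk (relIdeal A) (1 + X k) *
      Ideal.Quotient.mk (relIdeal A) (1 - qpol A k * X k) = 1 := by
  induction k using WellFoundedLT.induction with
  | ind k ih =>
    have hq := mk_qpol_mul_mk_qbar A k ih
    have hy := mk_X_sq A k
    simp only [map_add, map_sub, map_mul, map_one]
    linear_combination
      -Ideal.Quotient.mk (relIdeal A) (qpol A k) * hy - Ideal.Quotient.mk (relIdeal A) (X k) * hq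

/-- In the ring `B_A` one has `(1 + y_k)·(1 − q_k·y_k) = 1` for every `k`;
in particular `1 + y_k` is a unit of `B_A` with inverse `1 − q_k·y_k`. -/
theorem stmt3 {m : ℕ} (hm : 0 < m) (A : Fin m → Fin m → ℤ)
    (hA : ∀ i j : Fin m, j ≤ i → A i j = 0) (k : Fin m) :
    Ideal.Quotient.mk (relIdeal A) (1 + X k) *
      Ideal.Quotient.mk (relIdeal A) (1 - qpol A k * X k) = 1 ∧
    IsUnit (Ideal.Quotient.mk (relIdeal A) (1 + X k)) := by
  exact ⟨mk_one_add_X_mul A k, IsUnit.of_mul_eq_one _ (mk_one_add_X_mul A k)⟩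
end

section
/- If f ∈ ℤ[y₁,…,y_m] satisfies f_{(m)} = 0 (i.e., every monomial of f has total degree strictly greater than m), then in the unique expansion of the image of f in B_A as Σ_{I ⊆ {1,…,m}} a_I(f)·y_I, the top coefficient a_{{1,…,m}}(f) equals 0. -/
open MvPolynomial

/-- `f_{(n)}`: the sum of the monomials of `f` of total degree at most `n`. -/
noncomputable def trunc {σ : Type*} (n : ℕ) (f : MvPolynomial σ ℤ) : MvPolynomial σ ℤ :=
  ∑ d ∈ f.support.filter (fun d => (d.sum fun _ e => e) ≤ n),
    monomial d (coeff d f)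

section ReducedCoeff

variable {σ R : Type*} [CommRing R]

/-- The coefficient of `X k` after reducing modulo `X k ^ 2 - p * X k`, where `p` does not
involve `X k`: it sends `X k ^ (e + 1)` to `p ^ e` and `1` to `0`, and fixes the other variables. -/
noncomputable def reducedCoeff (k : σ) (p : MvPolynomial σ R) :
    MvPolynomial σ R →ₗ[R] MvPolynomial σ R :=
  (basisMonomials σ R).constr R fun d =>
    if d k = 0 then 0 else monomial (d.erase k) 1 * p ^ (d k - 1)

theorem reducedCoeff_monomial (k : σ) (p : MvPolynomial σ R) (d : σ →₀ ℕ) :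
    reducedCoeff k p (monomial d 1) =
      if d k = 0 then 0 else monomial (d.erase k) 1 * p ^ (d k - 1) := by
  simpa [reducedCoeff] using (basisMonomials σ R).constr_basis R
    (fun d => if d k = 0 then 0 else monomial (d.erase k) 1 * p ^ (d k - 1)) d

theorem reducedCoeff_X_mul {i k : σ} (hik : i ≠ k) (p h : MvPolynomial σ R) :
    reducedCoeff k p (X i * h) = X i * reducedCoeff k p h := by
  suffices reducedCoeff k p ∘ₗ LinearMap.mulLeft R (X i) =
      LinearMap.mulLeft R (X i) ∘ₗ reducedCoeff k p from LinearMap.congr_fun this h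
  refine (basisMonomials σ R).ext fun d => ?_
  have hd : (d + Finsupp.single i 1).erase k = d.erase k + Finsupp.single i 1 := by
    rw [Finsupp.erase_add, Finsupp.erase_single_ne hik.symm]
  have hX : (X i : MvPolynomial σ R) * monomial d 1 = monomial (d + Finsupp.single i 1) 1 := by
    rw [X, monomial_mul, add_comm, one_mul]
  have hX' : (X i : MvPolynomial σ R) * monomial (d.erase k) 1 =
      monomial (d.erase k + Finsupp.single i 1) 1 := by
    rw [X, monomial_mul, add_comm, one_mul]
  simp only [coe_basisMonomials, LinearMap.comp_apply, LinearMap.mulLeft_apply, hX,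
    reducedCoeff_monomial, hd, Finsupp.add_apply, Finsupp.single_eq_of_ne hik.symm, add_zero]
  split_ifs
  · simp
  · rw [← mul_assoc, hX']

theorem reducedCoeff_mul {k : σ} {g : MvPolynomial σ R} (hg : g ∈ supported R {k}ᶜ)
    (p h : MvPolynomial σ R) :
    reducedCoeff k p (g * h) = g * reducedCoeff k p h := by
  induction hg using Algebra.adjoin_induction generalizing h with
  | mem x hx =>
    obtain ⟨i, hi, rfl⟩ := hx
    exact reducedCoeff_X_mul hi p h
  | algebraMap r => rw [← Algebra.smul_def, map_smul, Algebra.smul_def]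
  | add x y _ _ hx hy => simp [add_mul, hx, hy]
  | mul x y _ _ hx hy => rw [mul_assoc, hx, hy, mul_assoc]

theorem reducedCoeff_one (k : σ) (p : MvPolynomial σ R) : reducedCoeff k p 1 = 0 := by
  simpa using reducedCoeff_monomial k p 0

theorem reducedCoeff_X (k : σ) (p : MvPolynomial σ R) : reducedCoeff k p (X k) = 1 := by
  rw [X, reducedCoeff_monomial]
  simp

theorem reducedCoeff_mul_relation {k : σ} {p : MvPolynomial σ R} (hp : p ∈ supported R {k}ᶜ)
    (g : MvPolynomial σ R) :
    reducedCoeff k p (g * (X k ^ 2 - p * X k)) = 0 := by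
  suffices reducedCoeff k p ∘ₗ LinearMap.mulRight R (X k ^ 2 - p * X k) = 0 from
    LinearMap.congr_fun this g
  refine (basisMonomials σ R).ext fun d => ?_
  have hX (n : ℕ) : (monomial d 1 : MvPolynomial σ R) * X k ^ n =
      monomial (d + Finsupp.single k n) 1 := by
    rw [X_pow_eq_monomial, monomial_mul, one_mul]
  have hsplit : (monomial d 1 : MvPolynomial σ R) * (X k ^ 2 - p * X k) =
      monomial (d + Finsupp.single k 2) 1 - p * monomial (d + Finsupp.single k 1) 1 := by
    rw [← hX, ← hX]
    ring
  simp only [coe_basisMonomials, LinearMap.comp_apply, LinearMap.mulRight_apply, hsplit, map_sub,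
    reducedCoeff_mul hp, reducedCoeff_monomial, Finsupp.erase_add, Finsupp.erase_single]
  simp
  ring

theorem monomial_mem_pow_idealOfVars (d : σ →₀ ℕ) (r : R) :
    monomial d r ∈ idealOfVars σ R ^ d.degree := by
  rw [mem_pow_idealOfVars_iff]
  intro x hx
  rw [Finset.mem_singleton.mp (support_monomial_subset hx)]

theorem reducedCoeff_mem_pow_idealOfVars (k : σ) {p : MvPolynomial σ R}
    (hp : p ∈ idealOfVars σ R) {n : ℕ} {f : MvPolynomial σ R}
    (hf : f ∈ idealOfVars σ R ^ (n + 1)) :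
    reducedCoeff k p f ∈ idealOfVars σ R ^ n := by
  rw [f.as_sum, map_sum]
  refine sum_mem fun d hd => ?_
  have hdeg : n + 1 ≤ d.degree := (mem_pow_idealOfVars_iff _ _).mp hf d hd
  rw [← mul_one (coeff d f), ← smul_eq_mul, ← smul_monomial, map_smul, reducedCoeff_monomial]
  refine Submodule.smul_of_tower_mem _ _ ?_
  split_ifs with hdk
  · exact zero_mem _
  · have hle : n ≤ (d.erase k).degree + (d k - 1) := by
      have hadd := congrArg Finsupp.degree (Finsupp.erase_add_single k d)
      rw [map_add, Finsupp.degree_single] at hadd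
      omega
    refine Ideal.pow_le_pow_right hle ?_
    rw [pow_add]
    exact Ideal.mul_mem_mul (monomial_mem_pow_idealOfVars _ _) (Ideal.pow_mem_pow hp _)

end ReducedCoeff

section TopCoeff

variable {m : ℕ} {p : Fin m → MvPolynomial (Fin m) ℤ}

/-- Extract successively the reduced coefficients of the variables `n - 1, …, 0`, and then the
constant coefficient. For `n = m` this is the coefficient of `y_{1,…,m}` in the quotient by the
relations `X k ^ 2 = p k * X k`. -/
noncomputable def topCoeff (p : Fin m → MvPolynomial (Fin m) ℤ) :
    (n : ℕ) → n ≤ m → MvPolynomial (Fin m) ℤ →ₗ[ℤ] ℤ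
  | 0, _ => lcoeff ℤ 0
  | n + 1, h => topCoeff p n (Nat.le_of_succ_le h) ∘ₗ reducedCoeff ⟨n, h⟩ (p ⟨n, h⟩)

theorem topCoeff_eq_zero_of_mem_pow (hp : ∀ k, p k ∈ idealOfVars (Fin m) ℤ) (n : ℕ) (hn : n ≤ m)
    {f : MvPolynomial (Fin m) ℤ} (hf : f ∈ idealOfVars (Fin m) ℤ ^ (n + 1)) :
    topCoeff p n hn f = 0 := by
  induction n generalizing f with
  | zero => exact (mem_pow_idealOfVars_iff' _ _).mp hf 0 (by simp)
  | succ n ih => exact ih _ (reducedCoeff_mem_pow_idealOfVars _ (hp _) hf)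

theorem topCoeff_mul_relation (hp : ∀ k, p k ∈ supported ℤ (Set.Iio k)) (n : ℕ) (hn : n ≤ m)
    {j : Fin m} (hj : j < n) (g : MvPolynomial (Fin m) ℤ) :
    topCoeff p n hn (g * (X j ^ 2 - p j * X j)) = 0 := by
  induction n generalizing g with
  | zero => omega
  | succ n ih =>
    rw [topCoeff, LinearMap.comp_apply]
    rcases Nat.lt_succ_iff_lt_or_eq.mp hj with hlt | rfl
    · have hne : j ≠ ⟨n, hn⟩ := fun h => hlt.ne (congrArg Fin.val h)
      have hX : X j ∈ supported ℤ ({⟨n, hn⟩}ᶜ : Set (Fin m)) := X_mem_supported.mpr hne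
      have hpj : p j ∈ supported ℤ ({⟨n, hn⟩}ᶜ : Set (Fin m)) :=
        supported_mono (fun i (hi : i < j) => (hi.trans hlt).ne) (hp j)
      rw [mul_comm, reducedCoeff_mul (sub_mem (pow_mem hX 2) (mul_mem hpj hX)), mul_comm]
      exact ih _ hlt _
    · rw [reducedCoeff_mul_relation (supported_mono (fun i (hi : i < j) => hi.ne) (hp j)), map_zero]

theorem reducedCoeff_prod_X (k : Fin m) (q : MvPolynomial (Fin m) ℤ) (I : Finset (Fin m)) :
    reducedCoeff k q (∏ i ∈ I, X i) = if k ∈ I then ∏ i ∈ I.erase k, X i else 0 := by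
  have hsupp : ∏ i ∈ I.erase k, X i ∈ supported ℤ ({k}ᶜ : Set (Fin m)) :=
    prod_mem fun i hi => X_mem_supported.mpr (Finset.ne_of_mem_erase hi)
  split_ifs with hk
  · rw [← Finset.prod_erase_mul I _ hk, reducedCoeff_mul hsupp, reducedCoeff_X, mul_one]
  · rw [Finset.erase_eq_of_notMem hk] at hsupp
    rw [← mul_one (∏ i ∈ I, X i), reducedCoeff_mul hsupp, reducedCoeff_one, mul_zero]

theorem topCoeff_prod_X_eq_zero (n : ℕ) (hn : n ≤ m) {I : Finset (Fin m)} {j : Fin m}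
    (hj : j < n) (hjI : j ∉ I) : topCoeff p n hn (∏ i ∈ I, X i) = 0 := by
  induction n generalizing I with
  | zero => omega
  | succ n ih =>
    rw [topCoeff, LinearMap.comp_apply, reducedCoeff_prod_X]
    split_ifs with hk
    · have hne : (j : ℕ) ≠ n := by
        rintro rfl
        exact hjI hk
      exact ih _ (by omega) (fun h => hjI (Finset.mem_of_mem_erase h))
    · exact map_zero _

theorem topCoeff_prod_X_eq_one (n : ℕ) (hn : n ≤ m) :
    topCoeff p n hn (∏ i with i.val < n, X i) = 1 := by
  induction n with
  | zero => simp [topCoeff]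
  | succ n ih =>
    have herase : (Finset.univ.filter fun i : Fin m => i.val < n + 1).erase ⟨n, hn⟩ =
        Finset.univ.filter fun i : Fin m => i.val < n := by
      ext i
      simp only [Finset.mem_erase, Finset.mem_filter_univ, ne_eq, Fin.ext_iff]
      omega
    rw [topCoeff, LinearMap.comp_apply, reducedCoeff_prod_X, if_pos (by simp), herase]
    exact ih _

end TopCoeff

section Relations

variable {m : ℕ} (A : Fin m → Fin m → ℤ)

theorem qpol_mem_supported (k : Fin m) : qpol A k ∈ supported ℤ (Set.Iio k) := by
  induction k using WellFoundedLT.induction with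
  | ind k ih =>
    rw [qpol]
    refine prod_mem fun i _ => ?_
    have hi : i.1 < k := Finset.mem_Iio.mp i.2
    have hX : X i.1 ∈ supported ℤ (Set.Iio k) := X_mem_supported.mpr hi
    have hq := supported_mono (Set.Iio_subset_Iio hi.le) (ih i.1 hi)
    exact mul_mem (pow_mem (add_mem hX (one_mem _)) _)
      (pow_mem (add_mem (neg_mem (mul_mem hq hX)) (one_mem _)) _)

theorem qbar_sub_one_mem_supported (k : Fin m) : qbar A k - 1 ∈ supported ℤ (Set.Iio k) := by
  refine sub_mem (prod_mem fun i hi => ?_) (one_mem _)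
  have hi : i < k := Finset.mem_Iio.mp hi
  have hX : X i ∈ supported ℤ (Set.Iio k) := X_mem_supported.mpr hi
  have hq := supported_mono (Set.Iio_subset_Iio hi.le) (qpol_mem_supported A i)
  exact mul_mem (pow_mem (add_mem (neg_mem (mul_mem hq hX)) (one_mem _)) _)
    (pow_mem (add_mem hX (one_mem _)) _)

theorem qbar_sub_one_mem_idealOfVars (k : Fin m) : qbar A k - 1 ∈ idealOfVars (Fin m) ℤ := by
  have hcoeff : constantCoeff (qbar A k - 1) = 0 := by simp [qbar]
  rw [← pow_one (idealOfVars (Fin m) ℤ), mem_pow_idealOfVars_iff']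
  intro x hx
  rwa [(Finsupp.degree_eq_zero_iff x).mp (Nat.lt_one_iff.mp hx)]

theorem topCoeff_eq_zero_of_mem_relIdeal {f : MvPolynomial (Fin m) ℤ} (hf : f ∈ relIdeal A) :
    topCoeff (fun k => qbar A k - 1) m le_rfl f = 0 := by
  obtain ⟨g, rfl⟩ := (Ideal.mem_span_range_iff_exists_fun).mp hf
  rw [map_sum]
  exact Finset.sum_eq_zero fun k _ =>
    topCoeff_mul_relation (qbar_sub_one_mem_supported A) m le_rfl k.isLt (g k)

end Relations

theorem mem_pow_idealOfVars_of_trunc_eq_zero {σ : Type*} {n : ℕ} {f : MvPolynomial σ ℤ}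
    (hf : trunc n f = 0) : f ∈ idealOfVars σ ℤ ^ (n + 1) := by
  classical
  rw [mem_pow_idealOfVars_iff]
  intro d hd
  by_contra! hlt
  have hle : (d.sum fun _ e => e) ≤ n := Nat.lt_succ_iff.mp hlt
  have hcoeff := congrArg (coeff d) hf
  rw [trunc, coeff_sum, Finset.sum_eq_single_of_mem d (by simp [hle, mem_support_iff.mp hd])
    (fun e _ he => by rw [coeff_monomial, if_neg he]), coeff_monomial, if_pos rfl] at hcoeff
  exact mem_support_iff.mp hd hcoeff

/-- If `f_{(m)} = 0` (every monomial of `f` has total degree `> m`), then in the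
unique expansion of the image of `f` in `B_A` as `Σ_I a_I(f)·y_I`, the top
coefficient `a_{{1,…,m}}(f)` equals `0`. -/
theorem stmt8 {m : ℕ} (hm : 0 < m) (A : Fin m → Fin m → ℤ)
    (hA : ∀ i j : Fin m, j ≤ i → A i j = 0)
    (f : MvPolynomial (Fin m) ℤ) (hf : trunc m f = 0)
    (c : Finset (Fin m) → ℤ)
    (hc : Ideal.Quotient.mk (relIdeal A) f = ∑ I : Finset (Fin m), c I • yI A I) :
    c Finset.univ = 0 := by
  have hmem : f - ∑ I : Finset (Fin m), c I • ∏ i ∈ I, X i ∈ relIdeal A := by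
    rw [← Ideal.Quotient.eq, hc, map_sum]
    exact Finset.sum_congr rfl fun I _ => (map_zsmul _ _ _).symm
  have htop := topCoeff_eq_zero_of_mem_relIdeal A hmem
  rw [map_sub, topCoeff_eq_zero_of_mem_pow (qbar_sub_one_mem_idealOfVars A) m le_rfl
    (mem_pow_idealOfVars_of_trunc_eq_zero hf), zero_sub, neg_eq_zero, map_sum,
    Finset.sum_eq_single_of_mem Finset.univ (Finset.mem_univ _)] at htop
  · have hone := topCoeff_prod_X_eq_one (p := fun k => qbar A k - 1) m le_rfl
    simp only [Fin.is_lt, Finset.filter_true] at hone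
    rwa [map_zsmul, hone, smul_eq_mul, mul_one] at htop
  · intro I _ hI
    obtain ⟨j, hj⟩ : ∃ j, j ∉ I := by
      by_contra! h
      exact hI (Finset.eq_univ_iff_forall.mpr h)
    rw [map_zsmul, topCoeff_prod_X_eq_zero m le_rfl j.isLt hj, smul_zero]
end
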